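/- Let (M,g) be a Riemannian manifold, u > 0 a smooth function, and X a vector field vanishing on the boundary of a domain with X → 0 at infinity (on an asymptotically flat exterior region). If X satisfies Γ_{(g,u)}(X) := -Δ X - u^{-1}∇X(∇u,·) + u^{-2}X(u)du = 0, then ⟨X, Γ_{(g,u)}(X)⟩ = -(1/2)Δ|X|² - (1/2)u^{-1}∇u·∇|X|² + |∇X|² + u^{-2}(X(u))², and consequently by the strong maximum principle X ≡ 0. -/

import Mathlib

noncomputable section

open scoped BigOperators
open MeasureTheory Filter

/-- Points of the coordinate chart `ℝⁿ`. -/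
abbrev Pt (n : ℕ) := Fin n → ℝ

/-- Partial derivative of a scalar function in the `i`-th coordinate direction. -/
def pd {n : ℕ} (i : Fin n) (f : Pt n → ℝ) (x : Pt n) : ℝ :=
  fderiv ℝ f x (Pi.single i 1)

/-- Inverse metric `g^{ij}` (pointwise matrix inverse). -/
def ginv {n : ℕ} (g : Pt n → Fin n → Fin n → ℝ) (x : Pt n) (i j : Fin n) : ℝ :=
  (Matrix.of (g x))⁻¹ i j

/-- Christoffel symbols `Γ^k_{ij}` of the metric `g`. -/
def chr {n : ℕ} (g : Pt n → Fin n → Fin n → ℝ) (x : Pt n) (k i j : Fin n) : ℝ :=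
  (1/2) * ∑ l, ginv g x k l *
    (pd i (fun y => g y j l) x + pd j (fun y => g y i l) x - pd l (fun y => g y i j) x)

/-- Covariant derivative of a covector field: `X_{i;j}`. -/
def cdCov {n : ℕ} (g : Pt n → Fin n → Fin n → ℝ) (X : Pt n → Fin n → ℝ)
    (x : Pt n) (i j : Fin n) : ℝ :=
  pd j (fun y => X y i) x - ∑ k, chr g x k i j * X x k

/-- Covariant derivative of a vector field: `X^i_{;j}`. -/
def cdVec {n : ℕ} (g : Pt n → Fin n → Fin n → ℝ) (X : Pt n → Fin n → ℝ)
    (x : Pt n) (i j : Fin n) : ℝ :=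
  pd j (fun y => X y i) x + ∑ k, chr g x i k j * X x k

/-- Covariant derivative of a symmetric (0,2)-tensor: `h_{ij;k}`. -/
def cd2 {n : ℕ} (g : Pt n → Fin n → Fin n → ℝ) (h : Pt n → Fin n → Fin n → ℝ)
    (x : Pt n) (i j k : Fin n) : ℝ :=
  pd k (fun y => h y i j) x - ∑ l, chr g x l i k * h x l j - ∑ l, chr g x l j k * h x i l

/-- Second covariant derivative of a covector field: `X_{i;jk}`. -/
def cdCov2 {n : ℕ} (g : Pt n → Fin n → Fin n → ℝ) (X : Pt n → Fin n → ℝ)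
    (x : Pt n) (i j k : Fin n) : ℝ :=
  cd2 g (fun y a b => cdCov g X y a b) x i j k

/-- Riemann curvature tensor `R^l_{ijk}`. -/
def riem {n : ℕ} (g : Pt n → Fin n → Fin n → ℝ) (x : Pt n) (l i j k : Fin n) : ℝ :=
  pd j (fun y => chr g y l i k) x - pd k (fun y => chr g y l i j) x
  + ∑ m, chr g x l m j * chr g x m i k - ∑ m, chr g x l m k * chr g x m i j

/-- Riemann curvature with all indices lowered. -/
def riemLow {n : ℕ} (g : Pt n → Fin n → Fin n → ℝ) (x : Pt n) (a b c d : Fin n) : ℝ :=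
  ∑ l, g x a l * riem g x l b c d

/-- Ricci curvature `R_{ij}`. -/
def ric {n : ℕ} (g : Pt n → Fin n → Fin n → ℝ) (x : Pt n) (i j : Fin n) : ℝ :=
  ∑ l, riem g x l i l j

/-- Lower the index of a vector field using `g`. -/
def lowerV {n : ℕ} (g : Pt n → Fin n → Fin n → ℝ) (X : Pt n → Fin n → ℝ)
    (x : Pt n) (i : Fin n) : ℝ :=
  ∑ j, g x i j * X x j

/-- Lie derivative of the metric `g` along the vector field `X`:
`(L_X g)_{ij} = X_{i;j} + X_{j;i}` (index lowered by `g`). -/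
def lieg {n : ℕ} (g : Pt n → Fin n → Fin n → ℝ) (X : Pt n → Fin n → ℝ)
    (x : Pt n) (i j : Fin n) : ℝ :=
  cdCov g (lowerV g X) x i j + cdCov g (lowerV g X) x j i

/-- Hessian `f_{;ij}`. -/
def hess {n : ℕ} (g : Pt n → Fin n → Fin n → ℝ) (f : Pt n → ℝ)
    (x : Pt n) (i j : Fin n) : ℝ :=
  cdCov g (fun y a => pd a f y) x i j

/-- Laplace–Beltrami operator on functions. -/
def lapf {n : ℕ} (g : Pt n → Fin n → Fin n → ℝ) (f : Pt n → ℝ) (x : Pt n) : ℝ :=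
  ∑ i, ∑ j, ginv g x i j * hess g f x i j

/-- Trace of a (0,2)-tensor with respect to `g`. -/
def trT {n : ℕ} (g : Pt n → Fin n → Fin n → ℝ) (h : Pt n → Fin n → Fin n → ℝ)
    (x : Pt n) : ℝ :=
  ∑ i, ∑ j, ginv g x i j * h x i j

/-- Divergence of a (0,2)-tensor, as a covector. -/
def divT {n : ℕ} (g : Pt n → Fin n → Fin n → ℝ) (h : Pt n → Fin n → Fin n → ℝ)
    (x : Pt n) (i : Fin n) : ℝ :=
  ∑ j, ∑ k, ginv g x j k * cd2 g h x i j k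

/-- Bianchi operator `β_g h = -div_g h + (1/2) d (tr_g h)`. -/
def bianchi {n : ℕ} (g : Pt n → Fin n → Fin n → ℝ) (h : Pt n → Fin n → Fin n → ℝ)
    (x : Pt n) (i : Fin n) : ℝ :=
  -divT g h x i + (1/2) * pd i (fun y => trT g h y) x

/-- Gradient vector field `(∇f)^i`. -/
def gradV {n : ℕ} (g : Pt n → Fin n → Fin n → ℝ) (f : Pt n → ℝ)
    (x : Pt n) (i : Fin n) : ℝ :=
  ∑ j, ginv g x i j * pd j f x

/-- The tensor is symmetric. -/
def symT {n : ℕ} (g : Pt n → Fin n → Fin n → ℝ) : Prop :=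
  ∀ x i j, g x i j = g x j i

/-- `g` is pointwise positive definite. -/
def posdef {n : ℕ} (g : Pt n → Fin n → Fin n → ℝ) : Prop :=
  ∀ (x : Pt n) (v : Fin n → ℝ), v ≠ 0 → 0 < ∑ i, ∑ j, g x i j * v i * v j

/-- Smooth componentwise. -/
def smoothT {n : ℕ} (g : Pt n → Fin n → Fin n → ℝ) : Prop :=
  ∀ i j, ContDiff ℝ (⊤ : ℕ∞) (fun x => g x i j)

/-- The lowered tensor `(T_h)_{ijk} = (1/2)(h_{ij;k} + h_{ik;j} - h_{jk;i})`. -/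
def Tlow {n : ℕ} (g : Pt n → Fin n → Fin n → ℝ) (h : Pt n → Fin n → Fin n → ℝ)
    (x : Pt n) (i j k : Fin n) : ℝ :=
  (1/2) * (cd2 g h x i j k + cd2 g h x i k j - cd2 g h x j k i)

/-- The operator `Γ_{(g,u)}(X) = -ΔX - u⁻¹ ∇X(∇u,·) + u⁻² X(u) du`
acting on covector fields `X`. -/
def GammaOp {n : ℕ} (g : Pt n → Fin n → Fin n → ℝ) (u : Pt n → ℝ)
    (X : Pt n → Fin n → ℝ) (x : Pt n) (i : Fin n) : ℝ :=
  -(∑ j, ∑ k, ginv g x j k * cdCov2 g X x i j k)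
    - (u x)⁻¹ * ∑ j, ∑ k, ginv g x j k * pd k u x * cdCov g X x i j
    + ((u x)^2)⁻¹ * (∑ j, ∑ k, ginv g x j k * X x j * pd k u x) * pd i u x

/-- g-inner product of two covector fields. -/
def innerC {n : ℕ} (g : Pt n → Fin n → Fin n → ℝ) (ω τ : Pt n → Fin n → ℝ)
    (x : Pt n) : ℝ :=
  ∑ i, ∑ j, ginv g x i j * ω x i * τ x j

/-!
Regard `X` as a section of the cotangent bundle with the inner product induced by `g`. Since the
Levi-Civita connection is compatible with this inner product, differentiating `|X|²` twice gives
`½ Δ|X|² = ⟨X, ΔX⟩ + |∇X|²`, and pairing `Γ(X)` with `X` yields the stated identity. If `Γ(X) = 0`,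
the identity says that `|X|²` is a subsolution, `Δ|X|² + u⁻¹ ∇u · ∇|X|² ≥ 0`.

The strong maximum principle is not needed: if `|X|²` were positive somewhere, its superlevel set
above a small positive level would be a compact subset `K` of `E`, and adding a small multiple of
the barrier `exp (c xᵢ)`, on which the operator is strictly positive on `K` for large `c`, produces
a strict subsolution with an interior local maximum, contradicting the second derivative test.
-/

/- The sum is `1ᵀ (A ⊙ B) 1`, and `A ⊙ B` is positive semidefinite by Schur's product theorem. -/
lemma sum_mul_nonneg_of_posSemidef {ι : Type*} [Fintype ι] {A B : Matrix ι ι ℝ} (hA : A.PosSemidef)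
    (hB : B.PosSemidef) : 0 ≤ ∑ i, ∑ j, A i j * B i j := by
  simpa [dotProduct, Matrix.mulVec] using (hA.hadamard hB).dotProduct_mulVec_nonneg 1

section Calculus

open scoped Matrix

variable {ι κ τ V : Type*} [NormedAddCommGroup V] [NormedSpace ℝ V]

lemma contDiff_matrix_det [Fintype ι] [DecidableEq ι] {k : WithTop ℕ∞} {A : V → Matrix ι ι ℝ}
    (hA : ∀ a b, ContDiff ℝ k fun x => A x a b) : ContDiff ℝ k fun x => (A x).det := by
  simp only [Matrix.det_apply']
  exact ContDiff.sum fun σ _ => contDiff_const.mul (contDiff_prod fun a _ => hA _ _)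

lemma contDiff_matrix_inv [Fintype ι] [DecidableEq ι] {k : WithTop ℕ∞} {A : V → Matrix ι ι ℝ}
    (hdet : ∀ x, IsUnit (A x).det) (hA : ∀ a b, ContDiff ℝ k fun x => A x a b) (a b : ι) :
    ContDiff ℝ k fun x => (A x)⁻¹ a b := by
  have cramer : ∀ x, (A x)⁻¹ a b = (A x).det⁻¹ * ((A x).updateRow b (Pi.single a 1)).det :=
    fun x => by simp [Matrix.inv_def, Matrix.adjugate_apply]
  simp only [cramer]
  refine ((contDiff_matrix_det hA).inv fun x => (hdet x).ne_zero).mul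
    (contDiff_matrix_det fun c d => ?_)
  obtain rfl | hcb := eq_or_ne c b
  · simpa only [Matrix.updateRow_self] using contDiff_const
  · simpa only [Matrix.updateRow_ne hcb] using hA c d

lemma tendsto_matrix_inv [Fintype ι] [DecidableEq ι] {α : Type*} {l : Filter α}
    {A : α → Matrix ι ι ℝ} {G : Matrix ι ι ℝ} (hG : IsUnit G.det) (hA : Tendsto A l (nhds G)) :
    Tendsto (fun x => (A x)⁻¹) l (nhds G⁻¹) := by
  have hdet := ((continuous_id.matrix_det.tendsto G).comp hA).inv₀ hG.ne_zero
  have hadj := (continuous_id.matrix_adjugate.tendsto G).comp hA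
  simpa [Matrix.inv_def, Function.comp_def] using hdet.smul hadj

variable {n : ℕ} {f h : Pt n → ℝ} {x : Pt n}

lemma contDiff_pd {k m : WithTop ℕ∞} (hf : ContDiff ℝ m f) (hkm : k + 1 ≤ m) (i : Fin n) :
    ContDiff ℝ k (pd i f) :=
  (hf.fderiv_right hkm).clm_apply contDiff_const

lemma pd_add (hf : DifferentiableAt ℝ f x) (hh : DifferentiableAt ℝ h x) (i : Fin n) :
    pd i (fun y => f y + h y) x = pd i f x + pd i h x := by
  simp [pd, fderiv_fun_add hf hh]

lemma pd_mul (hf : DifferentiableAt ℝ f x) (hh : DifferentiableAt ℝ h x) (i : Fin n) :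
    pd i (fun y => f y * h y) x = pd i f x * h x + f x * pd i h x := by
  simp only [pd, fderiv_fun_mul hf hh, add_apply, smul_apply, smul_eq_mul]
  ring

lemma pd_const_mul (c : ℝ) (hf : DifferentiableAt ℝ f x) (i : Fin n) :
    pd i (fun y => c * f y) x = c * pd i f x := by
  simp [pd, fderiv_const_mul hf]

lemma pd_sum {s : Finset ι} {F : ι → Pt n → ℝ}
    (hF : ∀ a ∈ s, DifferentiableAt ℝ (F a) x) (i : Fin n) :
    pd i (fun y => ∑ a ∈ s, F a y) x = ∑ a ∈ s, pd i (F a) x := by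
  simp [pd, fderiv_fun_sum hF]

lemma pd_dotProduct [Fintype ι] {v w : Pt n → ι → ℝ}
    (hv : ∀ a, DifferentiableAt ℝ (fun y => v y a) x)
    (hw : ∀ a, DifferentiableAt ℝ (fun y => w y a) x) (i : Fin n) :
    pd i (fun y => v y ⬝ᵥ w y) x
      = (fun a => pd i (fun y => v y a) x) ⬝ᵥ w x + v x ⬝ᵥ fun a => pd i (fun y => w y a) x := by
  simp only [dotProduct]
  rw [pd_sum fun a _ => (hv a).fun_mul (hw a), ← Finset.sum_add_distrib]
  exact Finset.sum_congr rfl fun a _ => pd_mul (hv a) (hw a) i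

/-- The entrywise partial derivative `∂_m A` of a matrix-valued function `A`, for stating the
product rule in matrix form. -/
def pdMatrix (m : Fin n) (A : Pt n → Matrix ι κ ℝ) (x : Pt n) : Matrix ι κ ℝ :=
  Matrix.of fun a b => pd m (fun y => A y a b) x

lemma pdMatrix_mul [Fintype κ] {A : Pt n → Matrix ι κ ℝ} {B : Pt n → Matrix κ τ ℝ}
    (hA : ∀ a b, DifferentiableAt ℝ (fun y => A y a b) x)
    (hB : ∀ a b, DifferentiableAt ℝ (fun y => B y a b) x) (m : Fin n) :
    pdMatrix m (fun y => A y * B y) x = pdMatrix m A x * B x + A x * pdMatrix m B x := by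
  ext a b
  exact pd_dotProduct (v := fun y => A y a) (w := fun y c => B y c b) (hA a) (fun c => hB c b) m

lemma pdMatrix_inv [Fintype ι] [DecidableEq ι] {A : Pt n → Matrix ι ι ℝ}
    (hdet : ∀ x, IsUnit (A x).det) (hA : ∀ a b, ContDiff ℝ 1 fun x => A x a b) (m : Fin n)
    (x : Pt n) : pdMatrix m (fun y => (A y)⁻¹) x = -((A x)⁻¹ * pdMatrix m A x * (A x)⁻¹) := by
  have hprod : pdMatrix m (fun y => (A y)⁻¹ * A y) x = 0 := by
    ext a b
    simp [pdMatrix, pd, Matrix.nonsing_inv_mul _ (hdet _)]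
  rw [pdMatrix_mul (fun a b => (contDiff_matrix_inv hdet hA a b).differentiable one_ne_zero x)
    fun a b => (hA a b).differentiable one_ne_zero x] at hprod
  calc pdMatrix m (fun y => (A y)⁻¹) x
      = pdMatrix m (fun y => (A y)⁻¹) x * A x * (A x)⁻¹ :=
        (Matrix.mul_nonsing_inv_cancel_right _ _ (hdet x)).symm
    _ = -((A x)⁻¹ * pdMatrix m A x * (A x)⁻¹) := by
        rw [eq_neg_of_add_eq_zero_left hprod, neg_mul]

lemma pd_dotProduct_mulVec [Fintype ι] [Fintype κ] {A : Pt n → Matrix ι κ ℝ}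
    {v : Pt n → ι → ℝ} {w : Pt n → κ → ℝ} (hA : ∀ a b, DifferentiableAt ℝ (fun y => A y a b) x)
    (hv : ∀ a, DifferentiableAt ℝ (fun y => v y a) x)
    (hw : ∀ b, DifferentiableAt ℝ (fun y => w y b) x) (m : Fin n) :
    pd m (fun y => v y ⬝ᵥ A y *ᵥ w y) x
      = (fun a => pd m (fun y => v y a) x) ⬝ᵥ A x *ᵥ w x + v x ⬝ᵥ pdMatrix m A x *ᵥ w x
        + v x ⬝ᵥ A x *ᵥ fun b => pd m (fun y => w y b) x := by
  have hAw : (fun a => pd m (fun y => (A y *ᵥ w y) a) x)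
      = pdMatrix m A x *ᵥ w x + A x *ᵥ fun b => pd m (fun y => w y b) x :=
    funext fun a => pd_dotProduct (v := fun y => A y a) (hA a) hw m
  rw [pd_dotProduct (w := fun y => A y *ᵥ w y) hv fun a => DifferentiableAt.fun_sum fun b _ =>
    (hA a b).fun_mul (hw b), hAw, dotProduct_add, add_assoc]

end Calculus

section Metric

open scoped Matrix

variable {n : ℕ} {g : Pt n → Fin n → Fin n → ℝ} {X Y : Pt n → Fin n → ℝ}

lemma isSymm_of_symT (hsym : symT g) (x : Pt n) : (Matrix.of (g x)).IsSymm :=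
  Matrix.ext fun i j => hsym x j i

lemma posDef_of_posdef (hsym : symT g) (hpos : posdef g) (x : Pt n) :
    (Matrix.of (g x)).PosDef := by
  refine .of_dotProduct_mulVec_pos (isSymm_of_symT hsym x) fun v hv => ?_
  refine (hpos x v hv).trans_eq ?_
  simp only [dotProduct, Matrix.mulVec, Finset.mul_sum, Matrix.of_apply, star_trivial]
  exact Finset.sum_congr rfl fun i _ => Finset.sum_congr rfl fun j _ => by ring

lemma isUnit_det_of_posdef (hsym : symT g) (hpos : posdef g) (x : Pt n) :
    IsUnit (Matrix.of (g x)).det :=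
  (posDef_of_posdef hsym hpos x).det_pos.ne'.isUnit

lemma ginv_comm (hsym : symT g) (x : Pt n) (i j : Fin n) : ginv g x i j = ginv g x j i :=
  (isSymm_of_symT hsym x).inv.apply j i

/-- The connection matrix `(Γ_m)^k_i = Γ^k_{im}` of the Levi-Civita connection in the coordinate
direction `m`; with it metric compatibility reads `∂_m G = Γ_mᵀ G + G Γ_m`. -/
def chrMatrix (g : Pt n → Fin n → Fin n → ℝ) (m : Fin n) (x : Pt n) : Matrix (Fin n) (Fin n) ℝ :=
  Matrix.of fun k i => chr g x k i m

lemma metric_mul_chrMatrix_apply {x : Pt n} (hdet : IsUnit (Matrix.of (g x)).det) (m l i : Fin n) :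
    (Matrix.of (g x) * chrMatrix g m x) l i
      = (1/2) * (pd i (fun y => g y m l) x + pd m (fun y => g y i l) x
          - pd l (fun y => g y i m) x) := by
  have hchr : chrMatrix g m x = (Matrix.of (g x))⁻¹ * Matrix.of fun l i => (1/2) *
      (pd i (fun y => g y m l) x + pd m (fun y => g y i l) x - pd l (fun y => g y i m) x) := by
    ext k i
    simp only [chrMatrix, chr, ginv, Matrix.of_apply, Matrix.mul_apply, Finset.mul_sum]
    exact Finset.sum_congr rfl fun l _ => by ring
  rw [hchr, Matrix.mul_nonsing_inv_cancel_left _ _ hdet, Matrix.of_apply]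

lemma pdMatrix_metric (hsym : symT g) {x : Pt n} (hdet : IsUnit (Matrix.of (g x)).det)
    (m : Fin n) : pdMatrix m (fun y => Matrix.of (g y)) x
      = (chrMatrix g m x)ᵀ * Matrix.of (g x) + Matrix.of (g x) * chrMatrix g m x := by
  have hswap : ∀ i j, (fun y => g y i j) = fun y => g y j i := fun i j => funext fun y => hsym y i j
  have htranspose : (chrMatrix g m x)ᵀ * Matrix.of (g x)
      = (Matrix.of (g x) * chrMatrix g m x)ᵀ := by
    rw [Matrix.transpose_mul, isSymm_of_symT hsym x]
  ext i j
  simp only [htranspose, Matrix.add_apply, Matrix.transpose_apply,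
    metric_mul_chrMatrix_apply hdet, pdMatrix, Matrix.of_apply, hswap m, hswap j i]
  ring

lemma pdMatrix_inv_metric (hsym : symT g) (hdet : ∀ x, IsUnit (Matrix.of (g x)).det)
    (hg : ∀ i j, ContDiff ℝ 1 fun x => g x i j) (m : Fin n) (x : Pt n) :
    pdMatrix m (fun y => (Matrix.of (g y))⁻¹) x
      = -((Matrix.of (g x))⁻¹ * (chrMatrix g m x)ᵀ + chrMatrix g m x * (Matrix.of (g x))⁻¹) := by
  rw [pdMatrix_inv hdet hg, pdMatrix_metric hsym (hdet x), mul_add, add_mul, mul_assoc,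
    Matrix.mul_nonsing_inv_cancel_right _ _ (hdet x),
    Matrix.nonsing_inv_mul_cancel_left _ _ (hdet x)]

/-- The inner product that the metric `g` induces on covectors at the point `x`: the value of
`innerC` at `x`, as a bilinear form. -/
def cometric (g : Pt n → Fin n → Fin n → ℝ) (x : Pt n) : LinearMap.BilinForm ℝ (Fin n → ℝ) :=
  Matrix.toBilin' (Matrix.of (g x))⁻¹

lemma innerC_eq_cometric (g : Pt n → Fin n → Fin n → ℝ) (ω τ : Pt n → Fin n → ℝ) (x : Pt n) :
    innerC g ω τ x = cometric g x (ω x) (τ x) := by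
  simp only [innerC, cometric, Matrix.toBilin'_apply, ginv]
  exact Finset.sum_congr rfl fun i _ => Finset.sum_congr rfl fun j _ => by ring

lemma cometric_comm (hsym : symT g) (x : Pt n) (v w : Fin n → ℝ) :
    cometric g x v w = cometric g x w v := by
  rw [cometric, Matrix.toBilin'_apply', Matrix.toBilin'_apply', Matrix.dotProduct_mulVec,
    dotProduct_comm, ← Matrix.mulVec_transpose, (isSymm_of_symT hsym x).inv]

lemma cometric_pos (hsym : symT g) (hpos : posdef g) (x : Pt n) {v : Fin n → ℝ} (hv : v ≠ 0) :
    0 < cometric g x v v := by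
  simpa only [cometric, Matrix.toBilin'_apply', star_trivial]
    using (posDef_of_posdef hsym hpos x).inv.dotProduct_mulVec_pos hv

lemma posSemidef_cometric_gram {ι : Type*} [Finite ι] (hsym : symT g) (hpos : posdef g) (x : Pt n)
    (v : ι → Fin n → ℝ) : (Matrix.of fun j k => cometric g x (v j) (v k)).PosSemidef := by
  have hgram : (Matrix.of fun j k => cometric g x (v j) (v k))
      = Matrix.of v * (Matrix.of (g x))⁻¹ * (Matrix.of v)ᴴ := by
    ext j k
    simp only [cometric, Matrix.toBilin'_apply', Matrix.dotProduct_mulVec]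
    rfl
  rw [hgram]
  exact (posDef_of_posdef hsym hpos x).inv.posSemidef.mul_mul_conjTranspose_same _

/-- The covariant derivative `∇_m X` of a covector field in the coordinate direction `m`, again a
covector field: `(∇_m X)_a = X_{a;m}`. -/
def covDeriv (g : Pt n → Fin n → Fin n → ℝ) (m : Fin n) (X : Pt n → Fin n → ℝ) (x : Pt n) :
    Fin n → ℝ :=
  fun a => cdCov g X x a m

lemma covDeriv_eq_sub_vecMul_chrMatrix (m : Fin n) (x : Pt n) :
    covDeriv g m X x = (fun a => pd m (fun y => X y a) x) - X x ᵥ* chrMatrix g m x := by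
  ext a
  simp [covDeriv, cdCov, chrMatrix, Matrix.vecMul, dotProduct, mul_comm]

lemma pd_innerC (hsym : symT g) (hdet : ∀ x, IsUnit (Matrix.of (g x)).det)
    (hg : ∀ i j, ContDiff ℝ 1 fun x => g x i j) {x : Pt n}
    (hX : ∀ i, DifferentiableAt ℝ (fun y => X y i) x)
    (hY : ∀ i, DifferentiableAt ℝ (fun y => Y y i) x) (m : Fin n) :
    pd m (innerC g X Y) x
      = cometric g x (covDeriv g m X x) (Y x) + cometric g x (X x) (covDeriv g m Y x) := by
  have hinner : innerC g X Y = fun y => X y ⬝ᵥ (Matrix.of (g y))⁻¹ *ᵥ Y y :=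
    funext fun y => by rw [innerC_eq_cometric, cometric, Matrix.toBilin'_apply']
  rw [hinner, pd_dotProduct_mulVec
    (fun i j => (contDiff_matrix_inv hdet hg i j).differentiable one_ne_zero x) hX hY,
    pdMatrix_inv_metric hsym hdet hg]
  simp only [cometric, Matrix.toBilin'_apply', covDeriv_eq_sub_vecMul_chrMatrix,
    sub_dotProduct, dotProduct_sub, dotProduct_neg, dotProduct_add, Matrix.neg_mulVec,
    Matrix.add_mulVec, Matrix.mulVec_sub, ← Matrix.mulVec_mulVec, Matrix.mulVec_transpose,
    Matrix.dotProduct_mulVec _ (chrMatrix g m x)]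
  ring

lemma tendsto_innerC_self_zero {l : Filter (Pt n)} {G : Matrix (Fin n) (Fin n) ℝ}
    (hG : IsUnit G.det) (hg : ∀ i j, Tendsto (fun x => g x i j) l (nhds (G i j)))
    (hX : ∀ i, Tendsto (fun x => X x i) l (nhds 0)) :
    Tendsto (innerC g X X) l (nhds 0) := by
  have hginv := tendsto_matrix_inv hG (A := fun x => Matrix.of (g x))
    (tendsto_pi_nhds.2 fun i => tendsto_pi_nhds.2 (hg i))
  have hsum := tendsto_finsetSum Finset.univ fun i _ => tendsto_finsetSum Finset.univ fun j _ =>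
    ((tendsto_pi_nhds.1 (tendsto_pi_nhds.1 hginv i) j).mul (hX i)).mul (hX j)
  simp only [mul_zero, Finset.sum_const_zero] at hsum
  exact hsum

end Metric

section Bochner

variable {n : ℕ} {g : Pt n → Fin n → Fin n → ℝ} {X : Pt n → Fin n → ℝ}

lemma contDiff_chr {k m : WithTop ℕ∞} (hdet : ∀ x, IsUnit (Matrix.of (g x)).det)
    (hg : ∀ i j, ContDiff ℝ m fun x => g x i j) (hkm : k + 1 ≤ m) (l i j : Fin n) :
    ContDiff ℝ k fun x => chr g x l i j :=
  contDiff_const.mul <| ContDiff.sum fun p _ =>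
    ((contDiff_matrix_inv hdet hg l p).of_le (le_self_add.trans hkm)).mul
      (((contDiff_pd (hg j p) hkm i).add (contDiff_pd (hg i p) hkm j)).sub
        (contDiff_pd (hg i j) hkm p))

lemma contDiff_covDeriv {k m : WithTop ℕ∞} (hdet : ∀ x, IsUnit (Matrix.of (g x)).det)
    (hg : ∀ i j, ContDiff ℝ m fun x => g x i j) (hX : ∀ i, ContDiff ℝ m fun x => X x i)
    (hkm : k + 1 ≤ m) (j i : Fin n) : ContDiff ℝ k fun x => covDeriv g j X x i :=
  (contDiff_pd (hX i) hkm j).sub <| ContDiff.sum fun l _ =>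
    (contDiff_chr hdet hg hkm l i j).mul ((hX l).of_le (le_self_add.trans hkm))

lemma contDiff_innerC {k : WithTop ℕ∞} {Y : Pt n → Fin n → ℝ}
    (hdet : ∀ x, IsUnit (Matrix.of (g x)).det) (hg : ∀ i j, ContDiff ℝ k fun x => g x i j)
    (hX : ∀ i, ContDiff ℝ k fun x => X x i) (hY : ∀ i, ContDiff ℝ k fun x => Y x i) :
    ContDiff ℝ k (innerC g X Y) :=
  ContDiff.sum fun i _ => ContDiff.sum fun j _ =>
    ((contDiff_matrix_inv hdet hg i j).mul (hX i)).mul (hY j)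

lemma pd_innerC_self (hsym : symT g) (hdet : ∀ x, IsUnit (Matrix.of (g x)).det)
    (hg : ∀ i j, ContDiff ℝ 1 fun x => g x i j) {x : Pt n}
    (hX : ∀ i, DifferentiableAt ℝ (fun y => X y i) x) (m : Fin n) :
    pd m (innerC g X X) x = 2 * cometric g x (X x) (covDeriv g m X x) := by
  rw [pd_innerC hsym hdet hg hX hX, cometric_comm hsym x (covDeriv g m X x), two_mul]

/-- The second covariant derivative `∇²_{jk} X` of a covector field, the covector `i ↦ X_{i;jk}`;
the later index `k` is the direction differentiated last. -/
def covDeriv₂ (g : Pt n → Fin n → Fin n → ℝ) (j k : Fin n) (X : Pt n → Fin n → ℝ) (x : Pt n) :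
    Fin n → ℝ :=
  fun i => cdCov2 g X x i j k

lemma covDeriv_covDeriv (j k : Fin n) (x : Pt n) :
    covDeriv g k (covDeriv g j X) x
      = covDeriv₂ g j k X x + ∑ l, chr g x l j k • covDeriv g l X x := by
  ext i
  simp only [covDeriv, covDeriv₂, cdCov2, cd2, Pi.add_apply, Finset.sum_apply, Pi.smul_apply,
    smul_eq_mul]
  rw [sub_add_cancel]
  rfl

lemma hess_innerC_self (hsym : symT g) (hdet : ∀ x, IsUnit (Matrix.of (g x)).det)
    (hg : ∀ i j, ContDiff ℝ 2 fun x => g x i j) (hX : ∀ i, ContDiff ℝ 2 fun x => X x i)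
    (x : Pt n) (j k : Fin n) :
    hess g (innerC g X X) x j k
      = 2 * (cometric g x (covDeriv g j X x) (covDeriv g k X x)
          + cometric g x (X x) (covDeriv₂ g j k X x)) := by
  have hg₁ : ∀ i j, ContDiff ℝ 1 fun x => g x i j := fun i j => (hg i j).of_le one_le_two
  have hXdiff : ∀ x i, DifferentiableAt ℝ (fun y => X y i) x :=
    fun x i => (hX i).differentiable two_ne_zero x
  have hDX : ∀ i, ContDiff ℝ 1 fun y => covDeriv g j X y i :=
    contDiff_covDeriv hdet hg hX one_add_one_eq_two.le j
  have hgrad : pd j (innerC g X X) = fun y => 2 * innerC g X (covDeriv g j X) y := by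
    ext y
    rw [pd_innerC_self hsym hdet hg₁ (hXdiff y), innerC_eq_cometric]
  have hpd_pd : pd k (pd j (innerC g X X)) x
      = 2 * (cometric g x (covDeriv g k X x) (covDeriv g j X x)
          + cometric g x (X x) (covDeriv g k (covDeriv g j X) x)) := by
    rw [hgrad, pd_const_mul, pd_innerC hsym hdet hg₁ (hXdiff x)
      fun i => (hDX i).differentiable one_ne_zero x]
    exact (contDiff_innerC hdet hg₁ (fun i => (hX i).of_le one_le_two) hDX).differentiable
      one_ne_zero x
  rw [hess, cdCov, hpd_pd, covDeriv_covDeriv, cometric_comm hsym x (covDeriv g k X x)]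
  simp only [pd_innerC_self hsym hdet hg₁ (hXdiff x), map_add, map_sum, map_smul, smul_eq_mul,
    mul_add, Finset.mul_sum, mul_left_comm _ (2 : ℝ)]
  ring

/-- The rough Laplacian `ΔX = g^{jk} ∇²_{jk} X` of a covector field. -/
def roughLaplacian (g : Pt n → Fin n → Fin n → ℝ) (X : Pt n → Fin n → ℝ) (x : Pt n) :
    Fin n → ℝ :=
  ∑ j, ∑ k, ginv g x j k • covDeriv₂ g j k X x

/-- The squared norm `|∇X|² = g^{jk} ⟨∇_j X, ∇_k X⟩` of the covariant derivative of a covector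
field. -/
def normSqCovDeriv (g : Pt n → Fin n → Fin n → ℝ) (X : Pt n → Fin n → ℝ) (x : Pt n) : ℝ :=
  ∑ j, ∑ k, ginv g x j k * cometric g x (covDeriv g j X x) (covDeriv g k X x)

lemma normSqCovDeriv_eq_sum (g : Pt n → Fin n → Fin n → ℝ) (X : Pt n → Fin n → ℝ) (x : Pt n) :
    normSqCovDeriv g X x = ∑ i, ∑ j, ∑ k, ∑ l,
      ginv g x i k * ginv g x j l * cdCov g X x i j * cdCov g X x k l := by
  have hsum : normSqCovDeriv g X x = ∑ j, ∑ l, ∑ i, ∑ k,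
      ginv g x i k * ginv g x j l * cdCov g X x i j * cdCov g X x k l := by
    simp only [normSqCovDeriv, ← innerC_eq_cometric g (covDeriv g _ X), innerC, covDeriv,
      Finset.mul_sum]
    exact Finset.sum_congr rfl fun j _ => Finset.sum_congr rfl fun l _ =>
      Finset.sum_congr rfl fun i _ => Finset.sum_congr rfl fun k _ => by ring
  rw [hsum]
  refine .trans ?_ Finset.sum_comm
  exact Finset.sum_congr rfl fun j _ => Finset.sum_comm_cycle.symm

lemma lapf_innerC_self (hsym : symT g) (hdet : ∀ x, IsUnit (Matrix.of (g x)).det)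
    (hg : ∀ i j, ContDiff ℝ 2 fun x => g x i j) (hX : ∀ i, ContDiff ℝ 2 fun x => X x i)
    (x : Pt n) :
    lapf g (innerC g X X) x
      = 2 * (normSqCovDeriv g X x + cometric g x (X x) (roughLaplacian g X x)) := by
  simp only [lapf, hess_innerC_self hsym hdet hg hX, normSqCovDeriv, roughLaplacian, map_sum,
    map_smul, smul_eq_mul, ← Finset.sum_add_distrib, Finset.mul_sum]
  exact Finset.sum_congr rfl fun j _ => Finset.sum_congr rfl fun k _ => by ring

lemma continuous_gradV (hdet : ∀ x, IsUnit (Matrix.of (g x)).det)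
    (hg : ∀ i j, Continuous fun x => g x i j) {u : Pt n → ℝ} (hu : ContDiff ℝ 1 u) (k : Fin n) :
    Continuous fun x => gradV g u x k :=
  continuous_finsetSum _ fun j _ =>
    (contDiff_matrix_inv hdet (fun a b => contDiff_zero.2 (hg a b)) k j).continuous.mul
      (contDiff_pd hu (zero_add 1).le j).continuous

lemma GammaOp_eq (g : Pt n → Fin n → Fin n → ℝ) (u : Pt n → ℝ) (X : Pt n → Fin n → ℝ)
    (x : Pt n) :
    GammaOp g u X x = -roughLaplacian g X x - (u x)⁻¹ • ∑ j, gradV g u x j • covDeriv g j X x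
      + ((u x)^2)⁻¹ • innerC g X (fun y k => pd k u y) x • fun i => pd i u x := by
  have hXu : ∑ j, ∑ k, ginv g x j k * X x j * pd k u x = innerC g X (fun y k => pd k u y) x := rfl
  ext i
  simp only [GammaOp, hXu, roughLaplacian, gradV, covDeriv, covDeriv₂, Pi.add_apply,
    Pi.sub_apply, Pi.neg_apply, Finset.sum_apply, Pi.smul_apply, smul_eq_mul, Finset.sum_mul]
  ring

lemma innerC_pd_eq_sum_gradV (hsym : symT g) (u : Pt n → ℝ) (τ : Pt n → Fin n → ℝ) (x : Pt n) :
    innerC g (fun y k => pd k u y) τ x = ∑ k, gradV g u x k * τ x k := by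
  simp only [innerC, gradV, Finset.sum_mul]
  rw [Finset.sum_comm]
  exact Finset.sum_congr rfl fun j _ => Finset.sum_congr rfl fun i _ => by rw [ginv_comm hsym]

theorem innerC_GammaOp_self (hsym : symT g) (hdet : ∀ x, IsUnit (Matrix.of (g x)).det)
    (hg : ∀ i j, ContDiff ℝ 2 fun x => g x i j) (hX : ∀ i, ContDiff ℝ 2 fun x => X x i)
    (u : Pt n → ℝ) (x : Pt n) :
    innerC g X (GammaOp g u X) x
      = -(1/2) * lapf g (innerC g X X) x
        - (1/2) * (u x)⁻¹ *
          innerC g (fun y k => pd k u y) (fun y k => pd k (innerC g X X) y) x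
        + normSqCovDeriv g X x + ((u x)^2)⁻¹ * innerC g X (fun y k => pd k u y) x ^ 2 := by
  have hpd (k : Fin n) := pd_innerC_self hsym hdet (fun i j => (hg i j).of_le one_le_two)
    (fun i => (hX i).differentiable two_ne_zero x) k
  rw [lapf_innerC_self hsym hdet hg hX, innerC_pd_eq_sum_gradV hsym, innerC_eq_cometric, GammaOp_eq]
  simp only [hpd, map_add, map_sub, map_neg, map_smul, map_sum, smul_eq_mul,
    ← innerC_eq_cometric g X fun y k => pd k u y, mul_left_comm _ (2 : ℝ), ← Finset.mul_sum]
  ring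

lemma normSqCovDeriv_nonneg (hsym : symT g) (hpos : posdef g) (X : Pt n → Fin n → ℝ)
    (x : Pt n) : 0 ≤ normSqCovDeriv g X x :=
  sum_mul_nonneg_of_posSemidef (posDef_of_posdef hsym hpos x).inv.posSemidef
    (posSemidef_cometric_gram hsym hpos x fun j => covDeriv g j X x)

lemma lapf_add_gradV_innerC_self_nonneg (hsym : symT g) (hpos : posdef g)
    (hg : ∀ i j, ContDiff ℝ 2 fun x => g x i j) (hX : ∀ i, ContDiff ℝ 2 fun x => X x i)
    {u : Pt n → ℝ} {x : Pt n} (hGamma : GammaOp g u X x = 0) :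
    0 ≤ lapf g (innerC g X X) x
      + ∑ k, (u x)⁻¹ * gradV g u x k * pd k (innerC g X X) x := by
  have hid := innerC_GammaOp_self hsym (isUnit_det_of_posdef hsym hpos) hg hX u x
  rw [innerC_eq_cometric, hGamma, map_zero, innerC_pd_eq_sum_gradV hsym] at hid
  simp only [mul_assoc, ← Finset.mul_sum]
  have hgrad := normSqCovDeriv_nonneg hsym hpos X x
  have hXu : 0 ≤ ((u x)^2)⁻¹ * innerC g X (fun y k => pd k u y) x ^ 2 := by positivity
  linarith

end Bochner

section Superlevel

variable {V : Type*} [TopologicalSpace V]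

lemma isCompact_superlevel {E : Set V} {f : V → ℝ} {c : ℝ}
    (hf : Continuous f) (hbd : ∀ x ∈ frontier E, f x < c)
    (hinf : ∀ᶠ x in cocompact V ⊓ 𝓟 E, f x < c) : IsCompact {x ∈ E | c ≤ f x} := by
  have hclosed : IsClosed {x ∈ E | c ≤ f x} := by
    have hclosure : {x ∈ E | c ≤ f x} = closure E ∩ {x | c ≤ f x} := by
      ext x
      refine ⟨fun hx => ⟨subset_closure hx.1, hx.2⟩, fun hx => ⟨?_, hx.2⟩⟩
      by_contra hxE
      exact (hbd x ⟨hx.1, fun hint => hxE (interior_subset hint)⟩).not_ge hx.2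
    rw [hclosure]
    exact isClosed_closure.inter (isClosed_le continuous_const hf)
  obtain ⟨t, ht, hsub⟩ := mem_cocompact.1 (eventually_inf_principal.1 hinf)
  refine ht.of_isClosed_subset hclosed fun x hx => ?_
  by_contra hxt
  exact (hsub hxt hx.1).not_ge hx.2

lemma exists_isLocalMax_add_const_mul {K : Set V} {f w : V → ℝ}
    (hK : IsCompact K) (hf : ContinuousOn f K) (hw : ContinuousOn w K) {x₀ : V} (hx₀ : x₀ ∈ K)
    {c : ℝ} (hc : c < f x₀) (hint : ∀ x ∈ K, c < f x → K ∈ nhds x) :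
    ∃ ε > 0, ∃ p ∈ K, IsLocalMax (fun x => f x + ε * w x) p := by
  obtain ⟨M, hM⟩ := hK.exists_bound_of_continuousOn hw
  have hM₀ : 0 ≤ M := (norm_nonneg _).trans (hM x₀ hx₀)
  set ε := (f x₀ - c) / (2 * M + 1)
  have hε : 0 < ε := div_pos (sub_pos.2 hc) (by positivity)
  obtain ⟨p, hp, hmax⟩ := hK.exists_isMaxOn ⟨x₀, hx₀⟩ (hf.add (continuousOn_const.mul hw))
  have hcp : c < f p := by
    have hε_mul : ε * (2 * M + 1) = f x₀ - c := div_mul_cancel₀ _ (by positivity)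
    have hosc : w p - w x₀ ≤ 2 * M := by
      linarith [le_of_abs_le (hM p hp), neg_le_of_abs_le (hM x₀ hx₀)]
    have hle : f x₀ + ε * w x₀ ≤ f p + ε * w p := hmax hx₀
    nlinarith [mul_le_mul_of_nonneg_left hosc hε.le]
  exact ⟨ε, hε, p, hp, hmax.isLocalMax (hint p hp hcp)⟩

end Superlevel

section MaximumPrinciple

lemma deriv_deriv_nonpos_of_isLocalMax {φ : ℝ → ℝ} {t : ℝ} (hmax : IsLocalMax φ t)
    (hφ : ContinuousAt φ t) : deriv (deriv φ) t ≤ 0 := by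
  by_contra! hpos
  have hmin : IsLocalMin φ t := isLocalMin_of_deriv_deriv_pos hpos hmax.deriv_eq_zero hφ
  have hconst : φ =ᶠ[nhds t] fun _ => φ t := by
    filter_upwards [hmax, hmin] with s hle hge using le_antisymm hle hge
  simp [hconst.deriv.deriv_eq] at hpos

variable {n : ℕ} {f : Pt n → ℝ}

lemma pd_pd_comm (hf : ContDiff ℝ 2 f) (i j : Fin n) (x : Pt n) :
    pd i (pd j f) x = pd j (pd i f) x := by
  have hdiff : DifferentiableAt ℝ (fderiv ℝ f) x :=
    (hf.fderiv_right one_add_one_eq_two.le).differentiable one_ne_zero x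
  have hpd_pd (k l : Fin n) :
      pd k (pd l f) x = fderiv ℝ (fderiv ℝ f) x (Pi.single k 1) (Pi.single l 1) := by
    change fderiv ℝ (fun y => fderiv ℝ f y (Pi.single l 1)) x (Pi.single k 1) = _
    simp [fderiv_clm_apply hdiff (differentiableAt_const _)]
  rw [hpd_pd, hpd_pd]
  exact hf.contDiffAt.isSymmSndFDerivAt (by simp) _ _

lemma hasDerivAt_comp_add_smul (hf : Differentiable ℝ f) (p v : Pt n) (t : ℝ) :
    HasDerivAt (fun s : ℝ => f (p + s • v)) (∑ i, v i * pd i f (p + t • v)) t := by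
  have hline : HasDerivAt (fun s : ℝ => p + s • v) v t := by
    simpa using ((hasDerivAt_id t).smul_const v).const_add p
  have hcoord (L : Pt n →L[ℝ] ℝ) : L v = ∑ i, v i * L (Pi.single i 1) := by
    conv_lhs => rw [pi_eq_sum_univ' v]
    simp
  have hcomp := (hf (p + t • v)).hasFDerivAt.comp_hasDerivAt t hline
  rwa [hcoord] at hcomp

lemma posSemidef_neg_hessian_of_isLocalMax (hf : ContDiff ℝ 2 f) {p : Pt n}
    (hmax : IsLocalMax f p) : (-Matrix.of fun i j => pd j (pd i f) p).PosSemidef := by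
  refine .of_dotProduct_mulVec_nonneg (Matrix.ext fun i j => ?_) fun v => ?_
  · simp [pd_pd_comm hf i j]
  have hpd (i : Fin n) : Differentiable ℝ (pd i f) :=
    (contDiff_pd hf one_add_one_eq_two.le i).differentiable one_ne_zero
  have hderiv : deriv (fun s : ℝ => f (p + s • v)) = fun s => ∑ i, v i * pd i f (p + s • v) :=
    funext fun s => (hasDerivAt_comp_add_smul (hf.differentiable two_ne_zero) p v s).deriv
  have hderiv₂ : deriv (deriv fun s : ℝ => f (p + s • v)) 0
      = ∑ i, v i * ∑ j, v j * pd j (pd i f) p := by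
    rw [hderiv]
    simpa using (HasDerivAt.fun_sum (u := Finset.univ) fun i _ =>
      (hasDerivAt_comp_add_smul (hpd i) p v 0).const_mul (v i)).deriv
  have hcont : Continuous fun s : ℝ => p + s • v := by fun_prop
  have hline : IsLocalMax (fun s : ℝ => f (p + s • v)) 0 :=
    IsLocalMax.comp_continuous (by simpa using hmax) hcont.continuousAt
  have hnonpos := deriv_deriv_nonpos_of_isLocalMax hline (hf.continuous.comp hcont).continuousAt
  rw [hderiv₂] at hnonpos
  simpa [dotProduct, Matrix.mulVec, mul_comm] using hnonpos

/-- The second-order operator `a^{ij} ∂_i ∂_j + b^k ∂_k` without zeroth-order term; it is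
(degenerate) elliptic where `a` is positive semidefinite. -/
def ellipticOp (a : Pt n → Matrix (Fin n) (Fin n) ℝ) (b : Pt n → Fin n → ℝ) (f : Pt n → ℝ)
    (x : Pt n) : ℝ :=
  ∑ i, ∑ j, a x i j * pd j (pd i f) x + ∑ k, b x k * pd k f x

variable {a : Pt n → Matrix (Fin n) (Fin n) ℝ} {b : Pt n → Fin n → ℝ}

lemma ellipticOp_add_const_mul {h : Pt n → ℝ} (hf : ContDiff ℝ 2 f) (hh : ContDiff ℝ 2 h) (c : ℝ)
    (x : Pt n) : ellipticOp a b (fun y => f y + c * h y) x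
      = ellipticOp a b f x + c * ellipticOp a b h x := by
  have hpd {φ ψ : Pt n → ℝ} (hφ : ContDiff ℝ 1 φ) (hψ : ContDiff ℝ 1 ψ) (i : Fin n) :
      pd i (fun y => φ y + c * ψ y) = fun y => pd i φ y + c * pd i ψ y := funext fun y => by
    have hψy := hψ.differentiable one_ne_zero y
    rw [pd_add (hφ.differentiable one_ne_zero y) (hψy.const_mul c), pd_const_mul c hψy]
  have hpd_pd (i j : Fin n) : pd j (pd i fun y => f y + c * h y)
      = fun y => pd j (pd i f) y + c * pd j (pd i h) y := by
    rw [hpd (hf.of_le one_le_two) (hh.of_le one_le_two),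
      hpd (contDiff_pd hf one_add_one_eq_two.le i) (contDiff_pd hh one_add_one_eq_two.le i)]
  simp only [ellipticOp, hpd_pd]
  simp only [hpd (hf.of_le one_le_two) (hh.of_le one_le_two), mul_add,
    Finset.sum_add_distrib, mul_left_comm _ c, ← Finset.mul_sum]
  ring

lemma ellipticOp_nonpos_of_isLocalMax (hf : ContDiff ℝ 2 f) {p : Pt n} (ha : (a p).PosSemidef)
    (hmax : IsLocalMax f p) : ellipticOp a b f p ≤ 0 := by
  have hgrad (k : Fin n) : pd k f p = 0 := by simp [pd, hmax.fderiv_eq_zero]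
  have htrace := sum_mul_nonneg_of_posSemidef ha (posSemidef_neg_hessian_of_isLocalMax hf hmax)
  simpa [ellipticOp, hgrad] using htrace

lemma ellipticOp_exp (c : ℝ) (i₀ : Fin n) (x : Pt n) :
    ellipticOp a b (fun y => Real.exp (c * y i₀)) x
      = c * (a x i₀ i₀ * c + b x i₀) * Real.exp (c * x i₀) := by
  have hpd (k : Fin n) : pd k (fun y => Real.exp (c * y i₀))
      = fun y => (Pi.single i₀ c : Pt n) k * Real.exp (c * y i₀) := funext fun y => by
    have hexp : HasFDerivAt (fun y : Pt n => Real.exp (c * y i₀))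
        (Real.exp (c * y i₀) • c • ContinuousLinearMap.proj (R := ℝ) (φ := fun _ => ℝ) i₀) y :=
      ((hasFDerivAt_apply i₀ y).const_mul c).exp
    simp [pd, hexp.fderiv, Pi.single_apply, eq_comm, mul_comm]
  have hdiff : Differentiable ℝ fun y : Pt n => Real.exp (c * y i₀) := by fun_prop
  have hpd_pd (i j : Fin n) : pd j (pd i fun y => Real.exp (c * y i₀)) x
      = (Pi.single i₀ c : Pt n) i * (Pi.single i₀ c : Pt n) j * Real.exp (c * x i₀) := by
    rw [hpd, pd_const_mul _ (hdiff x), hpd, mul_assoc]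
  simp only [ellipticOp, hpd_pd]
  simp only [hpd, Pi.single_apply, ite_mul, mul_ite, zero_mul, mul_zero, Finset.sum_ite_eq',
    Finset.mem_univ, if_true]
  ring

lemma exists_ellipticOp_exp_pos {K : Set (Pt n)} (hK : IsCompact K) {i₀ : Fin n}
    (ha : ContinuousOn (fun x => a x i₀ i₀) K) (hb : ContinuousOn (fun x => b x i₀) K)
    (hpos : ∀ x ∈ K, 0 < a x i₀ i₀) :
    ∃ c : ℝ, ∀ x ∈ K, 0 < ellipticOp a b (fun y => Real.exp (c * y i₀)) x := by
  obtain ⟨C, hC⟩ := hK.exists_bound_of_continuousOn (hb.div ha fun x hx => (hpos x hx).ne')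
  refine ⟨|C| + 1, fun x hx => ?_⟩
  have hax := hpos x hx
  have hratio : 0 < |C| + 1 + b x i₀ / a x i₀ i₀ := by
    have hC_le : -C ≤ b x i₀ / a x i₀ i₀ := neg_le_of_abs_le (hC x hx)
    linarith [le_abs_self C]
  rw [ellipticOp_exp, show a x i₀ i₀ * (|C| + 1) + b x i₀
    = a x i₀ i₀ * (|C| + 1 + b x i₀ / a x i₀ i₀) by field_simp]
  positivity

theorem nonpos_of_ellipticOp_nonneg {E : Set (Pt n)} (hE : IsOpen E) {i₀ : Fin n}
    (ha : ∀ x ∈ E, (a x).PosSemidef) (hpos : ∀ x ∈ E, 0 < a x i₀ i₀)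
    (hacont : ContinuousOn (fun x => a x i₀ i₀) E) (hbcont : ContinuousOn (fun x => b x i₀) E)
    (hf : ContDiff ℝ 2 f) (hbd : ∀ x ∈ frontier E, f x ≤ 0)
    (hinf : Tendsto f (cocompact (Pt n) ⊓ 𝓟 E) (nhds 0))
    (hsub : ∀ x ∈ E, 0 ≤ ellipticOp a b f x) : ∀ x ∈ E, f x ≤ 0 := by
  intro x₀ hx₀
  by_contra! hfx₀
  obtain ⟨c, hc, hcx₀⟩ := exists_between hfx₀
  set K := {x ∈ E | c ≤ f x}
  have hKE : K ⊆ E := Set.sep_subset _ _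
  have hK : IsCompact K := isCompact_superlevel hf.continuous (fun x hx => (hbd x hx).trans_lt hc)
    (hinf.eventually_lt_const hc)
  obtain ⟨r, hr⟩ := exists_ellipticOp_exp_pos hK (hacont.mono hKE) (hbcont.mono hKE)
    fun x hx => hpos x (hKE hx)
  have hw : ContDiff ℝ 2 fun y : Pt n => Real.exp (r * y i₀) := by fun_prop
  obtain ⟨ε, hε, p, hp, hmax⟩ := exists_isLocalMax_add_const_mul hK hf.continuous.continuousOn
    hw.continuous.continuousOn ⟨hx₀, hcx₀.le⟩ hcx₀ fun x hx hcx => by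
      filter_upwards [hE.mem_nhds hx.1, hf.continuous.continuousAt.eventually_const_lt hcx]
        with y hyE hcy using ⟨hyE, hcy.le⟩
  have hLp := ellipticOp_nonpos_of_isLocalMax (b := b) (hf.add (contDiff_const.mul hw))
    (ha p (hKE hp)) hmax
  rw [ellipticOp_add_const_mul hf hw] at hLp
  linarith [hsub p (hKE hp), mul_pos hε (hr p hp)]

lemma lapf_add_eq_ellipticOp (g : Pt n → Fin n → Fin n → ℝ) (b : Pt n → Fin n → ℝ) (f : Pt n → ℝ)
    (x : Pt n) : lapf g f x + ∑ k, b x k * pd k f x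
      = ellipticOp (fun y => (Matrix.of (g y))⁻¹)
          (fun y k => b y k - ∑ i, ∑ j, ginv g y i j * chr g y k i j) f x := by
  have hchr : ∑ i, ∑ j, ginv g x i j * ∑ k, chr g x k i j * pd k f x
      = ∑ k, (∑ i, ∑ j, ginv g x i j * chr g x k i j) * pd k f x := by
    simp only [Finset.mul_sum, Finset.sum_mul, mul_assoc]
    rw [Finset.sum_comm_cycle, Finset.sum_comm_cycle]
  simp only [lapf, hess, cdCov, ellipticOp, mul_sub, sub_mul, Finset.sum_sub_distrib, hchr]
  simp only [ginv]
  ring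

theorem nonpos_of_lapf_add_nonneg [Nonempty (Fin n)] {g : Pt n → Fin n → Fin n → ℝ}
    (hsym : symT g) (hpos : posdef g) (hg : ∀ i j, ContDiff ℝ 1 fun x => g x i j)
    {E : Set (Pt n)} (hE : IsOpen E) (hb : ∀ k, ContinuousOn (fun x => b x k) E)
    (hf : ContDiff ℝ 2 f) (hbd : ∀ x ∈ frontier E, f x ≤ 0)
    (hinf : Tendsto f (cocompact (Pt n) ⊓ 𝓟 E) (nhds 0))
    (hsub : ∀ x ∈ E, 0 ≤ lapf g f x + ∑ k, b x k * pd k f x) : ∀ x ∈ E, f x ≤ 0 := by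
  have hdet := isUnit_det_of_posdef hsym hpos
  have hposDef (x : Pt n) := (posDef_of_posdef hsym hpos x).inv
  have hginv (i j : Fin n) : Continuous fun x => ginv g x i j :=
    (contDiff_matrix_inv hdet hg i j).continuous
  have hchr (k i j : Fin n) : Continuous fun x => chr g x k i j :=
    (contDiff_chr hdet hg (zero_add 1).le k i j).continuous
  obtain ⟨i₀⟩ := ‹Nonempty (Fin n)›
  refine nonpos_of_ellipticOp_nonneg hE (i₀ := i₀) (fun x _ => (hposDef x).posSemidef)
    (fun x _ => (hposDef x).diag_pos) (hginv i₀ i₀).continuousOn ((hb i₀).sub ?_) hf hbd hinf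
    fun x hx => (lapf_add_eq_ellipticOp g b f x).symm ▸ hsub x hx
  exact Continuous.continuousOn <| continuous_finsetSum _ fun i _ => continuous_finsetSum _
    fun j _ => (hginv i j).mul (hchr i₀ i j)

end MaximumPrinciple

theorem statement7_general {n : ℕ} (g : Pt n → Fin n → Fin n → ℝ) (u : Pt n → ℝ)
    (E : Set (Pt n)) (hE : IsOpen E) (hgsym : symT g) (hgpos : posdef g)
    (hg : ∀ i j, ContDiff ℝ 2 fun x => g x i j) (hu : ContDiff ℝ 1 u) (hu₀ : ∀ x ∈ E, u x ≠ 0)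
    (X : Pt n → Fin n → ℝ) (hX : ∀ i, ContDiff ℝ 2 fun x => X x i)
    (hXbd : ∀ x ∈ frontier E, ∀ i, X x i = 0)
    (hXInf : Tendsto (innerC g X X) (cocompact (Pt n) ⊓ 𝓟 E) (nhds 0))
    (hGamma : ∀ x ∈ E, ∀ i, GammaOp g u X x i = 0) :
    (∀ x ∈ E,
      innerC g X (fun y a => GammaOp g u X y a) x
        = -(1/2) * lapf g (fun y => innerC g X X y) x
          - (1/2) * (u x)⁻¹ *
              innerC g (fun y a => pd a u y) (fun y a => pd a (fun z => innerC g X X z) y) x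
          + (∑ i, ∑ j, ∑ k, ∑ l, ginv g x i k * ginv g x j l *
              cdCov g X x i j * cdCov g X x k l)
          + ((u x)^2)⁻¹ * (∑ j, ∑ k, ginv g x j k * X x j * pd k u x)^2) ∧
    (∀ x ∈ E, ∀ i, X x i = 0) := by
  have hdet := isUnit_det_of_posdef hgsym hgpos
  refine ⟨fun x _ => ?_, fun x hx i => ?_⟩
  · rw [← normSqCovDeriv_eq_sum]
    exact innerC_GammaOp_self hgsym hdet hg hX u x
  have hnonempty : Nonempty (Fin n) := ⟨i⟩
  have hg₁ (i j : Fin n) : ContDiff ℝ 1 fun x => g x i j := (hg i j).of_le one_le_two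
  have hdrift (k : Fin n) : ContinuousOn (fun x => (u x)⁻¹ * gradV g u x k) E :=
    (hu.continuous.continuousOn.inv₀ hu₀).mul
      (continuous_gradV hdet (fun i j => (hg₁ i j).continuous) hu k).continuousOn
  have hnormSq : innerC g X X x ≤ 0 :=
    nonpos_of_lapf_add_nonneg hgsym hgpos hg₁ hE hdrift (contDiff_innerC hdet hg hX hX)
      (fun y hy => by simp [innerC, hXbd y hy]) hXInf
      (fun y hy => lapf_add_gradV_innerC_self_nonneg hgsym hgpos hg hX (funext (hGamma y hy))) x hx
  by_contra hXi
  have hXx : X x ≠ 0 := fun h => hXi (congrFun h i)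
  exact (cometric_pos hgsym hgpos x hXx).not_ge (innerC_eq_cometric g X X x ▸ hnormSq)

/-- for a vector field (covector) `X` on an asymptotically flat
exterior region `E` vanishing on the boundary and at infinity, with
`Γ_{(g,u)}(X) = 0`, the pointwise identity
`⟨X, Γ(X)⟩ = -(1/2)Δ|X|² - (1/2)u⁻¹ ∇u·∇|X|² + |∇X|² + u⁻²(X(u))²`
holds, and consequently (by the strong maximum principle) `X ≡ 0` on `E`. -/
theorem statement7 {n : ℕ} (g : Pt n → Fin n → Fin n → ℝ) (u : Pt n → ℝ)
    (E : Set (Pt n)) (hE : IsOpen E) (hExt : IsCompact Eᶜ)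
    (hgsym : symT g) (hgpos : posdef g) (hgsm : smoothT g)
    (husm : ContDiff ℝ (⊤ : ℕ∞) u) (hupos : ∀ x, 0 < u x)
    -- asymptotic flatness of the region
    (hAF : ∀ i j, Tendsto (fun x => g x i j) (cocompact (Pt n))
      (nhds (if i = j then (1:ℝ) else 0)))
    (huInf : Tendsto u (cocompact (Pt n)) (nhds 1))
    (X : Pt n → Fin n → ℝ) (hXsm : ∀ i, ContDiff ℝ (⊤ : ℕ∞) (fun x => X x i))
    (hXbd : ∀ x ∈ frontier E, ∀ i, X x i = 0)
    (hXInf : ∀ i, Tendsto (fun x => X x i) (cocompact (Pt n)) (nhds 0))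
    (hGamma : ∀ x ∈ E, ∀ i, GammaOp g u X x i = 0) :
    (∀ x ∈ E,
      innerC g X (fun y a => GammaOp g u X y a) x
        = -(1/2) * lapf g (fun y => innerC g X X y) x
          - (1/2) * (u x)⁻¹ *
              innerC g (fun y a => pd a u y) (fun y a => pd a (fun z => innerC g X X z) y) x
          + (∑ i, ∑ j, ∑ k, ∑ l, ginv g x i k * ginv g x j l *
              cdCov g X x i j * cdCov g X x k l)
          + ((u x)^2)⁻¹ * (∑ j, ∑ k, ginv g x j k * X x j * pd k u x)^2) ∧
    (∀ x ∈ E, ∀ i, X x i = 0) := by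
  have hnormSq : Tendsto (innerC g X X) (cocompact (Pt n)) (nhds 0) :=
    tendsto_innerC_self_zero (G := 1) (by simp) (by simpa only [Matrix.one_apply] using hAF) hXInf
  exact statement7_general g u E hE hgsym hgpos (fun i j => contDiff_infty.1 (hgsm i j) 2)
    (contDiff_infty.1 husm 1) (fun x _ => (hupos x).ne') X (fun i => contDiff_infty.1 (hXsm i) 2)
    hXbd (hnormSq.mono_left inf_le_left) hGamma
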